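/- Let G be a bipartite graph, let 0 < λ < 1 with βλ/6 a positive integer, let H be an unweighted edge-degree-constrained subgraph EDCS(G, β, β(1−λ)), and let G' be obtained from G by deleting a single edge e of G. Then there exists an unweighted EDCS(G', β, β(1−λ)) H' (with H' ⊆ E(G')) such that the symmetric difference of H∖{e} and H' contains at most 24/λ + 2 edges. -/

import Mathlib

/-- The degree of `v` in the simple graph `H`. -/
noncomputable def sdeg {V : Type*} (H : SimpleGraph V) (v : V) : ℕ :=
  (H.neighborSet v).ncard

/-!
Deleting an edge `ab` of `H` lowers the degrees of `a` and `b` by one. Keep the degrees in `H` as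
intended degrees: the EDCS inequalities hold for them, and for the true degrees they can fail only
on edges at the two defects `a` and `b`. Repairing a violated edge at a defect, that is, adding or
removing it, restores the degree at the defect and moves the defect to the other end of the edge,
changing its sign. Since `G` is bipartite, a defect that reaches the other one cancels it. Otherwise
a defect whose degree is too large moves along an edge of intended degree sum `β`, and one whose
degree is too small along an edge of intended degree sum `β⁻`, so two consecutive moves of a defect
change the intended degree at it by `β - β⁻`, always in the same direction. As intended degrees lie
between `0` and `β`, each defect makes at most about `2β / (β - β⁻)` moves.
-/

open SimpleGraph

/-- The inequalities that make `K` an edge-degree-constrained subgraph EDCS(`G`, `β`, `B`), with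
`d v` in place of the degree of `v` in `K`. Keeping `d` separate allows `K` to be tested against
intended degrees that differ from its own. The lower parameter `B` is an integer because
`β(1 - λ)` may be replaced by its ceiling. -/
structure EdgeDegreeConstrained {V : Type*} (G K : SimpleGraph V) (d : V → ℕ) (β : ℕ) (B : ℤ) :
    Prop where
  le : K ≤ G
  upper : ∀ ⦃u v⦄, K.Adj u v → d u + d v ≤ β
  lower : ∀ ⦃u v⦄, G.Adj u v → ¬ K.Adj u v → B ≤ d u + d v

/-- `K` is an unweighted EDCS(`G`, `β`, `B`). -/
def IsEDCS {V : Type*} (G K : SimpleGraph V) (β : ℕ) (B : ℤ) : Prop :=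
  EdgeDegreeConstrained G K (sdeg K) β B

/-- The pair `u v` witnesses that `K` is not an EDCS(`G`, `β`, `B`). -/
def IsViolation {V : Type*} (G K : SimpleGraph V) (β : ℕ) (B : ℤ) (u v : V) : Prop :=
  K.Adj u v ∧ β < sdeg K u + sdeg K v ∨
    (G.Adj u v ∧ ¬ K.Adj u v) ∧ (sdeg K u + sdeg K v : ℤ) < B

/-- `K` satisfies the EDCS inequalities for the intended degrees `d`, and its true degrees differ
from `d` only at the defects `p` and `q`. In terms of the proper `±1`-colouring `σ` of `G`, the
degree is off by `σ p` at `p` and by `-σ q` at `q`; there is no defect if `p = q`. With these signs,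
adding or removing an edge at a defect moves the defect along the edge. -/
structure NearEDCS {V : Type*} [DecidableEq V] (G K : SimpleGraph V) (σ : V → ℤˣ) (d : V → ℕ)
    (β : ℕ) (B : ℤ) (p q : V) : Prop extends EdgeDegreeConstrained G K d β B where
  finite_neighborSet : ∀ z, (K.neighborSet z).Finite
  sign_adj : ∀ ⦃u v⦄, G.Adj u v → σ v = -σ u
  sdeg_eq : ∀ z, (sdeg K z : ℤ) = d z + σ z * ((if z = p then 1 else 0) - if z = q then 1 else 0)

/-- `β - B` times a bound on the number of moves that a defect of sign `s` at a vertex of intended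
degree `t` can still make. -/
def defectPotential (β : ℕ) (B : ℤ) (s : ℤˣ) (t : ℕ) : ℤ :=
  if s = 1 then 2 * t + (β - B) else 2 * (β - t)

/-- `β - B` times a bound on the number of edges that have to be changed to repair a `NearEDCS`
with defects `p` and `q`. -/
def repairPotential {V : Type*} [DecidableEq V] (σ : V → ℤˣ) (d : V → ℕ) (β : ℕ) (B : ℤ)
    (p q : V) : ℤ :=
  if p = q then 0
  else defectPotential β B (σ p) (d p) + defectPotential β B (-σ q) (d q) + (β - B)

section

variable {V : Type*} {G K H : SimpleGraph V} {σ : V → ℤˣ} {d : V → ℕ} {β : ℕ} {B : ℤ} {p q u v : V}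

section Toggle

lemma symmDiff_edge_adj (huv : u ≠ v) {x y : V} :
    (symmDiff K (edge u v)).Adj x y ↔ Xor (K.Adj x y) (s(x, y) = s(u, v)) := by
  simp only [symmDiff_def, sup_adj, sdiff_adj, edge_adj, Sym2.eq_iff, Xor]
  grind

lemma symmDiff_edge_of_adj (h : K.Adj u v) : symmDiff K (edge u v) = K.deleteEdges {s(u, v)} := by
  ext x y
  rw [symmDiff_edge_adj h.ne, deleteEdges_adj, Set.mem_singleton_iff, Xor]
  grind [adj_congr_of_sym2]

lemma symmDiff_edgeSet_symmDiff_edge_subset :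
    symmDiff K.edgeSet (symmDiff K (edge u v)).edgeSet ⊆ {s(u, v)} := by
  have hedge : (symmDiff K (edge u v)).edgeSet = symmDiff K.edgeSet (edge u v).edgeSet := by
    rw [symmDiff_def, symmDiff_def, edgeSet_sup, edgeSet_sdiff, edgeSet_sdiff]
    rfl
  rw [hedge, symmDiff_symmDiff_cancel_left]
  exact edgeSet_edge_subset

lemma finite_neighborSet_symmDiff_edge {z : V} (hz : (K.neighborSet z).Finite) :
    ((symmDiff K (edge u v)).neighborSet z).Finite := by
  refine (hz.union (Set.toFinite {u, v})).subset fun w hw ↦ ?_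
  simp only [mem_neighborSet, symmDiff_def, sup_adj, sdiff_adj, edge_adj] at hw
  grind [mem_neighborSet]

lemma sdeg_symmDiff_edge_left [Decidable (K.Adj u v)] (huv : u ≠ v)
    (hu : (K.neighborSet u).Finite) :
    (sdeg (symmDiff K (edge u v)) u : ℤ) = sdeg K u + if K.Adj u v then -1 else 1 := by
  have hmem (w : V) : w ∈ (symmDiff K (edge u v)).neighborSet u ↔ Xor (K.Adj u w) (w = v) := by
    rw [mem_neighborSet, symmDiff_edge_adj huv, Sym2.congr_right]
  split_ifs with h
  · have hN : (symmDiff K (edge u v)).neighborSet u = K.neighborSet u \ {v} := by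
      ext w
      grind [mem_neighborSet]
    have := Set.ncard_sdiff_singleton_add_one (K.mem_neighborSet u v |>.2 h) hu
    rw [sdeg, sdeg, hN]
    lia
  · have hN : (symmDiff K (edge u v)).neighborSet u = insert v (K.neighborSet u) := by
      ext w
      grind [mem_neighborSet]
    rw [sdeg, sdeg, hN, Set.ncard_insert_of_notMem (by simpa using h) hu, Nat.cast_add_one]

lemma sdeg_symmDiff_edge_of_ne {z : V} (hu : z ≠ u) (hv : z ≠ v) :
    sdeg (symmDiff K (edge u v)) z = sdeg K z := by
  have hN : (symmDiff K (edge u v)).neighborSet z = K.neighborSet z := by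
    ext w
    simp only [mem_neighborSet, symmDiff_def, sup_adj, sdiff_adj, edge_adj]
    tauto
  rw [sdeg, sdeg, hN]

lemma sdeg_symmDiff_edge [DecidableEq V] [DecidableRel K.Adj] (huv : u ≠ v)
    (hK : ∀ z, (K.neighborSet z).Finite) (z : V) :
    (sdeg (symmDiff K (edge u v)) z : ℤ) =
      sdeg K z +
        (if K.Adj u v then -1 else 1) * ((if z = u then 1 else 0) + if z = v then 1 else 0) := by
  rcases eq_or_ne z u with rfl | hu
  · simp [sdeg_symmDiff_edge_left huv (hK z), huv]
  rcases eq_or_ne z v with rfl | hv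
  · rw [edge_comm, sdeg_symmDiff_edge_left huv.symm (hK z)]
    simp [K.adj_comm, huv.symm]
  · simp [sdeg_symmDiff_edge_of_ne hu hv, hu, hv]

end Toggle

namespace EdgeDegreeConstrained

lemma symmDiff_edge (h : EdgeDegreeConstrained G K d β B) (hG : G.Adj u v)
    (hupper : d u + d v ≤ β) (hlower : B ≤ d u + d v) :
    EdgeDegreeConstrained G (symmDiff K (edge u v)) d β B where
  le := symmDiff_le_sup.trans (sup_le h.le ((edge_le_iff G).2 (.inr hG)))
  upper x y hxy := by
    rcases (symmDiff_edge_adj hG.ne).1 hxy with ⟨hK, -⟩ | ⟨he, -⟩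
    · exact h.upper hK
    · grind [Sym2.eq_iff]
  lower x y hxy hn := by
    rw [symmDiff_edge_adj hG.ne] at hn
    by_cases he : s(x, y) = s(u, v)
    · grind [Sym2.eq_iff]
    · exact h.lower hxy fun hK ↦ hn (.inl ⟨hK, he⟩)

lemma deleteEdges (h : EdgeDegreeConstrained G K d β B) (s : Set (Sym2 V)) :
    EdgeDegreeConstrained (G.deleteEdges s) (K.deleteEdges s) d β B where
  le := deleteEdges_mono h.le
  upper _ _ huv := h.upper (deleteEdges_le s huv)
  lower _ _ huv hn := h.lower (deleteEdges_le s huv) fun hK ↦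
    hn (deleteEdges_adj.2 ⟨hK, (deleteEdges_adj.1 huv).2⟩)

end EdgeDegreeConstrained

lemma IsEDCS.sdeg_le (h : IsEDCS G K β B) (z : V) : sdeg K z ≤ β := by
  rcases (K.neighborSet z).eq_empty_or_nonempty with hz | ⟨w, hw⟩
  · simp [sdeg, hz]
  · exact (Nat.le_add_right _ _).trans (h.upper hw)

lemma IsViolation.symm (h : IsViolation G K β B u v) : IsViolation G K β B v u := by
  rwa [IsViolation, K.adj_comm, G.adj_comm, add_comm (sdeg K v), add_comm (sdeg K v : ℤ)]

lemma exists_isViolation (hKG : K ≤ G) (h : ¬ IsEDCS G K β B) :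
    ∃ u v, IsViolation G K β B u v := by
  contrapose! h
  simp only [IsViolation, not_or, not_and, not_lt] at h
  exact ⟨hKG, fun u v ↦ (h u v).1, fun u v hG hK ↦ (h u v).2 ⟨hG, hK⟩⟩

section Potential

lemma defectPotential_nonneg (hB : B < β) {s : ℤˣ} {t : ℕ} (ht : t ≤ β) :
    0 ≤ defectPotential β B s t := by
  unfold defectPotential
  split_ifs <;> lia

variable [DecidableEq V]

lemma repairPotential_comm : repairPotential (-σ) d β B q p = repairPotential σ d β B p q := by
  simp only [repairPotential, Pi.neg_apply, neg_neg, eq_comm (a := q)]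
  split_ifs <;> ring

lemma repairPotential_nonneg (hB : B < β) (hd : ∀ z, d z ≤ β) :
    0 ≤ repairPotential σ d β B p q := by
  unfold repairPotential
  split_ifs
  · rfl
  · linarith [defectPotential_nonneg (s := σ p) hB (hd p),
      defectPotential_nonneg (s := -σ q) hB (hd q)]

end Potential

namespace NearEDCS

variable [DecidableEq V]

lemma symm (h : NearEDCS G K σ d β B p q) : NearEDCS G K (-σ) d β B q p where
  toEdgeDegreeConstrained := h.toEdgeDegreeConstrained
  finite_neighborSet := h.finite_neighborSet
  sign_adj u v huv := congrArg Neg.neg (h.sign_adj huv)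
  sdeg_eq z := by
    rw [h.sdeg_eq z, Pi.neg_apply, Units.val_neg]
    ring

lemma sdeg_eq_of_ne (h : NearEDCS G K σ d β B p q) {z : V} (hp : z ≠ p) (hq : z ≠ q) :
    sdeg K z = d z := by
  simpa [hp, hq] using h.sdeg_eq z

lemma isEDCS (h : NearEDCS G K σ d β B p p) : IsEDCS G K β B := by
  have hd : sdeg K = d := funext fun z ↦ by simpa using h.sdeg_eq z
  rw [IsEDCS, hd]
  exact h.toEdgeDegreeConstrained

lemma exists_isViolation_at_defect (h : NearEDCS G K σ d β B p q) (hK : ¬ IsEDCS G K β B) :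
    ∃ v, IsViolation G K β B p v ∨ IsViolation G K β B q v := by
  obtain ⟨u, v, huv⟩ := exists_isViolation h.le hK
  by_contra! hno
  have hsdeg {x y : V} (hxy : IsViolation G K β B x y) : sdeg K x = d x :=
    h.sdeg_eq_of_ne (fun hx ↦ (hno y).1 (hx ▸ hxy)) (fun hx ↦ (hno y).2 (hx ▸ hxy))
  have hu := hsdeg huv
  have hv := hsdeg huv.symm
  rcases huv with ⟨hadj, hlt⟩ | ⟨⟨hG, hadj⟩, hlt⟩
  · exact absurd (h.upper hadj) (by lia)
  · exact absurd (h.lower hG hadj) (by lia)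

lemma sdeg_add_sdeg (h : NearEDCS G K σ d β B p q) (hpq : p ≠ q) (hG : G.Adj p v) :
    (sdeg K p + sdeg K v : ℤ) = d p + d v + σ p * (1 + if v = q then 1 else 0) := by
  rw [h.sdeg_eq p, h.sdeg_eq v, h.sign_adj hG]
  simp only [if_true, if_neg hpq, if_neg hG.ne', Units.val_neg]
  ring

lemma sign_and_sum_of_isViolation (h : NearEDCS G K σ d β B p q) (hpq : p ≠ q)
    (hv : IsViolation G K β B p v) :
    (σ p = 1 ∧ K.Adj p v ∧ (d p + d v : ℤ) ≤ β ∧ β ≤ d p + d v + if v = q then 1 else 0) ∨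
      (σ p = -1 ∧ ¬ K.Adj p v ∧ B ≤ d p + d v ∧ d p + d v ≤ B + if v = q then 1 else 0) := by
  have hG : G.Adj p v := hv.elim (fun hK ↦ h.le hK.1) (·.1.1)
  have hsum := h.sdeg_add_sdeg hpq hG
  rcases hv with ⟨hK, hlt⟩ | ⟨⟨-, hK⟩, hlt⟩
  · have hle := h.upper hK
    rcases Int.units_eq_one_or (σ p) with hs | hs <;> rw [hs] at hsum <;> push_cast at hsum
    · exact .inl ⟨hs, hK, by lia, by lia⟩
    · lia
  · have hle := h.lower hG hK
    rcases Int.units_eq_one_or (σ p) with hs | hs <;> rw [hs] at hsum <;> push_cast at hsum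
    · lia
    · exact .inr ⟨hs, hK, by lia, by lia⟩

lemma symmDiff_edge (h : NearEDCS G K σ d β B p q) (hB : B < β) (hpq : p ≠ q)
    (hv : IsViolation G K β B p v) : NearEDCS G (symmDiff K (edge p v)) σ d β B v q := by
  let _ : DecidableRel K.Adj := Classical.decRel _
  have hG : G.Adj p v := hv.elim (fun hK ↦ h.le hK.1) (·.1.1)
  have hcases := h.sign_and_sum_of_isViolation hpq hv
  have hsign : (if K.Adj p v then -1 else 1 : ℤ) = -σ p := by
    rcases hcases with ⟨hs, hK, -⟩ | ⟨hs, hK, -⟩ <;> simp [hs, hK]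
  refine ⟨h.toEdgeDegreeConstrained.symmDiff_edge hG (by lia) (by lia),
    fun z ↦ finite_neighborSet_symmDiff_edge (h.finite_neighborSet z), h.sign_adj, fun z ↦ ?_⟩
  have hσp : (σ p * if z = p then 1 else 0 : ℤ) = σ z * if z = p then 1 else 0 := by
    rcases eq_or_ne z p with rfl | hz <;> simp [*]
  have hσv : (σ p * if z = v then 1 else 0 : ℤ) = -σ z * if z = v then 1 else 0 := by
    rcases eq_or_ne z v with rfl | hz <;> simp [*, h.sign_adj hG]
  rw [sdeg_symmDiff_edge hG.ne h.finite_neighborSet, hsign, h.sdeg_eq z]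
  linear_combination -hσp - hσv

lemma repairPotential_add_le (h : NearEDCS G K σ d β B p q) (hB : B < β) (hd : ∀ z, d z ≤ β)
    (hpq : p ≠ q) (hv : IsViolation G K β B p v) :
    repairPotential σ d β B v q + (β - B) ≤ repairPotential σ d β B p q := by
  have hG : G.Adj p v := hv.elim (fun hK ↦ h.le hK.1) (·.1.1)
  rw [repairPotential, repairPotential, if_neg hpq]
  split_ifs with hvq
  · linarith [defectPotential_nonneg (s := σ p) hB (hd p),
      defectPotential_nonneg (s := -σ q) hB (hd q)]
  · suffices defectPotential β B (σ v) (d v) + (β - B) = defectPotential β B (σ p) (d p) by lia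
    have hcases := h.sign_and_sum_of_isViolation hpq hv
    rw [if_neg hvq] at hcases
    rw [h.sign_adj hG]
    have hne : (-1 : ℤˣ) ≠ 1 := by decide
    rcases hcases with ⟨hs, -, hle, hge⟩ | ⟨hs, -, hge, hle⟩ <;>
      simp only [hs, defectPotential, neg_neg, if_true, if_neg hne] <;> lia

lemma exists_move (h : NearEDCS G K σ d β B p q) (hB : B < β) (hd : ∀ z, d z ≤ β)
    (hK : ¬ IsEDCS G K β B) :
    ∃ K' p' q' e, NearEDCS G K' σ d β B p' q' ∧ symmDiff K.edgeSet K'.edgeSet ⊆ {e} ∧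
      repairPotential σ d β B p' q' + (β - B) ≤ repairPotential σ d β B p q := by
  have hpq : p ≠ q := by
    rintro rfl
    exact hK h.isEDCS
  obtain ⟨v, hv | hv⟩ := h.exists_isViolation_at_defect hK
  · exact ⟨_, v, q, _, h.symmDiff_edge hB hpq hv, symmDiff_edgeSet_symmDiff_edge_subset,
      h.repairPotential_add_le hB hd hpq hv⟩
  · have hpot := h.symm.repairPotential_add_le hB hd hpq.symm hv
    rw [repairPotential_comm, repairPotential_comm] at hpot
    exact ⟨_, p, v, _, neg_neg σ ▸ (h.symm.symmDiff_edge hB hpq.symm hv).symm,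
      symmDiff_edgeSet_symmDiff_edge_subset, hpot⟩

theorem exists_isEDCS {K : SimpleGraph V} {p q : V} (h : NearEDCS G K σ d β B p q)
    (hB : B < β) (hd : ∀ z, d z ≤ β) :
    ∃ H', IsEDCS G H' β B ∧ ∃ n : ℕ, (symmDiff K.edgeSet H'.edgeSet).encard ≤ n ∧
      (β - B) * n ≤ repairPotential σ d β B p q := by
  by_cases hK : IsEDCS G K β B
  · exact ⟨K, hK, 0, by simp, by simpa using repairPotential_nonneg hB hd⟩
  obtain ⟨K', p', q', e, h', he, hpot⟩ := h.exists_move hB hd hK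
  obtain ⟨H', hH', n, hn, hnpot⟩ := h'.exists_isEDCS hB hd
  refine ⟨H', hH', n + 1, ?_, by push_cast; linarith⟩
  calc (symmDiff K.edgeSet H'.edgeSet).encard
      ≤ (symmDiff K.edgeSet K'.edgeSet ∪ symmDiff K'.edgeSet H'.edgeSet).encard :=
        Set.encard_le_encard (symmDiff_triangle _ _ _)
    _ ≤ (symmDiff K'.edgeSet H'.edgeSet).encard + 1 := by
        rw [add_comm, ← Set.encard_singleton e]
        exact (Set.encard_union_le _ _).trans (by gcongr)
    _ ≤ (n + 1 : ℕ) := by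
        push_cast
        gcongr
termination_by (repairPotential σ d β B p q).toNat
decreasing_by
  have := repairPotential_nonneg (σ := σ) (p := p') (q := q') hB hd
  lia

end NearEDCS

lemma IsEDCS.nearEDCS_deleteEdges [DecidableEq V] (hH : IsEDCS G H β B)
    (hfin : ∀ z, (H.neighborSet z).Finite) (hσ : ∀ ⦃u v⦄, G.Adj u v → σ v = -σ u) {a b : V}
    (hab : H.Adj a b) (ha : σ a = -1) :
    NearEDCS (G.deleteEdges {s(a, b)}) (H.deleteEdges {s(a, b)}) σ (sdeg H) β B a b where
  toEdgeDegreeConstrained := EdgeDegreeConstrained.deleteEdges hH _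
  finite_neighborSet z := (hfin z).subset fun _ hw ↦ deleteEdges_le _ hw
  sign_adj _ _ huv := hσ (deleteEdges_le _ huv)
  sdeg_eq z := by
    have hb : σ b = 1 := by rw [hσ (hH.le hab), ha, neg_neg]
    let _ : DecidableRel H.Adj := Classical.decRel _
    rw [← symmDiff_edge_of_adj hab, sdeg_symmDiff_edge hab.ne hfin, if_pos hab]
    rcases eq_or_ne z a with rfl | hza
    · simp [ha, hab.ne]
    rcases eq_or_ne z b with rfl | hzb <;> simp [*]

lemma exists_sign_of_colorable_two (hG : G.Colorable 2) (a : V) :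
    ∃ σ : V → ℤˣ, (∀ ⦃u v⦄, G.Adj u v → σ v = -σ u) ∧ σ a = -1 := by
  let c : G.Coloring ℤˣ := hG.toColoring (by simp)
  refine ⟨fun z ↦ -c a * c z, fun u v huv ↦ ?_, by simp [Int.units_mul_self]⟩
  simp only [Int.units_ne_iff_eq_neg.1 (c.valid huv.symm), mul_neg]

theorem IsEDCS.exists_isEDCS_deleteEdges (hH : IsEDCS G H β B) (hG : G.Colorable 2)
    (hfin : ∀ z, (H.neighborSet z).Finite) (hB : B < β) (a b : V) :
    ∃ H', IsEDCS (G.deleteEdges {s(a, b)}) H' β B ∧ ∃ n : ℕ,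
      (symmDiff (H.deleteEdges {s(a, b)}).edgeSet H'.edgeSet).encard ≤ n ∧
      (β - B) * n ≤ 4 * β + (β - B) := by
  classical
  by_cases hab : H.Adj a b
  · obtain ⟨σ, hσ, ha⟩ := exists_sign_of_colorable_two hG a
    have hnear := hH.nearEDCS_deleteEdges hfin hσ hab ha
    obtain ⟨H', hH', n, hn, hnpot⟩ := hnear.exists_isEDCS hB hH.sdeg_le
    refine ⟨H', hH', n, hn, hnpot.trans ?_⟩
    simp only [repairPotential, if_neg hab.ne, hσ (hH.le hab), ha, neg_neg, defectPotential,
      if_neg (show (-1 : ℤˣ) ≠ 1 by decide)]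
    lia
  · have hdel : H.deleteEdges {s(a, b)} = H := by simpa using hab
    refine ⟨H, ?_, 0, by simp [hdel], by rw [Nat.cast_zero]; lia⟩
    have h := EdgeDegreeConstrained.deleteEdges hH {s(a, b)}
    rwa [hdel] at h

lemma le_eight_div_add_one {m n b lam : ℝ} (hlam : 0 < lam) (hm : 0 < m)
    (hb : b * lam ≤ 2 * m) (hn : m * n ≤ 4 * b + m) : n ≤ 8 / lam + 1 := by
  have hb' : b ≤ 2 * m / lam := (le_div_iff₀ hlam).2 hb
  refine le_of_mul_le_mul_left ?_ hm
  calc m * n ≤ 4 * (2 * m / lam) + m := by linarith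
    _ = m * (8 / lam + 1) := by ring

end

theorem stmt16_general {V : Type*} (G H : SimpleGraph V)
    (hbip : G.Colorable 2) (hHG : H ≤ G) (hfin : ∀ v, (H.neighborSet v).Finite)
    (β : ℕ) (lam : ℝ) (hβ : 1 ≤ β * lam)
    (hP1 : ∀ u v : V, H.Adj u v → sdeg H u + sdeg H v ≤ β)
    (hP2 : ∀ u v : V, G.Adj u v → ¬ H.Adj u v →
      (β : ℝ) * (1 - lam) ≤ (sdeg H u + sdeg H v : ℝ))
    (a b : V) :
    ∃ H' : SimpleGraph V, H' ≤ G.deleteEdges {s(a, b)} ∧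
      (∀ u v : V, H'.Adj u v → sdeg H' u + sdeg H' v ≤ β) ∧
      (∀ u v : V, (G.deleteEdges {s(a, b)}).Adj u v → ¬ H'.Adj u v →
        (β : ℝ) * (1 - lam) ≤ (sdeg H' u + sdeg H' v : ℝ)) ∧
      (symmDiff (H.deleteEdges {s(a, b)}).edgeSet H'.edgeSet).Finite ∧
      ((symmDiff (H.deleteEdges {s(a, b)}).edgeSet H'.edgeSet).ncard : ℝ) ≤ 8 / lam + 1 := by
  set B : ℤ := ⌈(β : ℝ) * (1 - lam)⌉ with hBdef
  have hlower (x y : ℕ) : (β : ℝ) * (1 - lam) ≤ x + y ↔ B ≤ x + y := by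
    rw [hBdef, Int.ceil_le]
    push_cast
    rfl
  have hlam : 0 < lam := pos_of_mul_pos_right (by linarith) β.cast_nonneg
  have hB : B + 1 ≤ β := by
    suffices B ≤ β - 1 by lia
    rw [hBdef, Int.ceil_le]
    push_cast
    linarith
  have hBℝ : (B + 1 : ℝ) ≤ β := by exact_mod_cast hB
  have hB_lt : (B : ℝ) < β * (1 - lam) + 1 := Int.ceil_lt_add_one _
  have hH : IsEDCS G H β B := ⟨hHG, hP1, fun u v hG hn ↦ (hlower _ _).1 (hP2 u v hG hn)⟩
  obtain ⟨H', hH', n, hn, hbound⟩ := hH.exists_isEDCS_deleteEdges hbip hfin hB a b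
  obtain ⟨hfinite, hncard⟩ := Set.encard_le_coe_iff_finite_ncard_le.1 hn
  refine ⟨H', hH'.le, hH'.upper, fun u v hG hn ↦ (hlower _ _).2 (hH'.lower hG hn), hfinite, ?_⟩
  calc ((symmDiff (H.deleteEdges {s(a, b)}).edgeSet H'.edgeSet).ncard : ℝ) ≤ n := by
        exact_mod_cast hncard
    _ ≤ 8 / lam + 1 := le_eight_div_add_one (m := β - B) (b := β) hlam (by linarith) (by linarith)
        (by exact_mod_cast hbound)

/-- Let `H` be an unweighted EDCS(G, β, β(1−λ)) of a bipartite graph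
`G`, with `0 < λ < 1` and `βλ/6` a positive integer, and let `G'` be obtained from `G` by
deleting the edge `{a, b}` of `G`.  Then there is an unweighted EDCS(G', β, β(1−λ)) `H'`
whose symmetric difference with `H ∖ {a, b}` has at most `24/λ + 2` edges. -/
theorem stmt16 {V : Type*} [Fintype V] (G H : SimpleGraph V)
    (hbip : G.Colorable 2) (hHG : H ≤ G)
    (β : ℕ) (lam : ℝ) (hlam0 : 0 < lam) (hlam1 : lam < 1)
    (ℓ : ℕ) (hℓpos : 0 < ℓ) (hℓ : (ℓ : ℝ) = β * lam / 6)
    (hP1 : ∀ u v : V, H.Adj u v → sdeg H u + sdeg H v ≤ β)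
    (hP2 : ∀ u v : V, G.Adj u v → ¬ H.Adj u v →
      (β : ℝ) * (1 - lam) ≤ (sdeg H u + sdeg H v : ℝ))
    (a b : V) (hadj : G.Adj a b) :
    ∃ H' : SimpleGraph V, H' ≤ G.deleteEdges {s(a, b)} ∧
      (∀ u v : V, H'.Adj u v → sdeg H' u + sdeg H' v ≤ β) ∧
      (∀ u v : V, (G.deleteEdges {s(a, b)}).Adj u v → ¬ H'.Adj u v →
        (β : ℝ) * (1 - lam) ≤ (sdeg H' u + sdeg H' v : ℝ)) ∧
      ((symmDiff (H.deleteEdges {s(a, b)}).edgeSet H'.edgeSet).ncard : ℝ) ≤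
        24 / lam + 2 := by
  have hβ : 1 ≤ β * lam := by linarith [Nat.one_le_cast (α := ℝ).2 hℓpos]
  obtain ⟨H', hle, hupper, hlower, -, hcard⟩ :=
    stmt16_general G H hbip hHG (fun _ ↦ Set.toFinite _) β lam hβ hP1 hP2 a b
  exact ⟨H', hle, hupper, hlower, hcard.trans (by gcongr <;> norm_num)⟩
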